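/- Every unsatisfiable weakly linear k-CNF formula (k ≥ 1) has more than C(f_occ(k−1)+2, 2) clauses; in particular, since f_occ(k−1) ≥ 2^{k-1}/(e(k−1)) − 1, every weakly linear k-CNF formula with at most 4^k/(8 e^2 (k−1)^2) clauses is satisfiable (for k ≥ 2). -/

import Mathlib

abbrev Var := ℕ
abbrev Lit := Var × Bool
abbrev Clause := Finset Lit
abbrev CNF := Finset Clause

/-- A clause is valid if it does not contain a variable together with its negation. -/
def Clause.valid (C : Clause) : Prop := ∀ x : Var, ¬(((x, true) ∈ C) ∧ ((x, false) ∈ C))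

/-- The set of variables of a clause. -/
def vbl (C : Clause) : Finset Var := C.image Prod.fst

/-- A `k`-CNF formula: every clause is valid and has exactly `k` literals. -/
def IsKCNF (k : ℕ) (F : CNF) : Prop := ∀ C ∈ F, Clause.valid C ∧ C.card = k

/-- A CNF formula is linear if any two distinct clauses share at most one variable. -/
def LinearCNF (F : CNF) : Prop := ∀ C ∈ F, ∀ D ∈ F, C ≠ D → (vbl C ∩ vbl D).card ≤ 1

/-- A CNF formula is weakly linear if any two distinct clauses share at most one literal. -/
def WeaklyLinear (F : CNF) : Prop := ∀ C ∈ F, ∀ D ∈ F, C ≠ D → (C ∩ D).card ≤ 1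

/-- An assignment satisfies a formula if every clause contains a true literal. -/
def Satisfies (α : Var → Bool) (F : CNF) : Prop := ∀ C ∈ F, ∃ l ∈ C, α l.1 = l.2

def Unsat (F : CNF) : Prop := ¬ ∃ α, Satisfies α F
/-- The number of clauses of `F` containing the literal `u`. -/
def occCount (F : CNF) (u : Lit) : ℕ := (F.filter (fun C => u ∈ C)).card

/-- `focc j` is the largest `d` such that every `j`-CNF formula in which every
literal occurs in at most `d` clauses is satisfiable. -/
noncomputable def focc (j : ℕ) : ℕ :=
  sSup {d : ℕ | ∀ F : CNF, IsKCNF j F → (∀ u : Lit, occCount F u ≤ d) → ∃ α, Satisfies α F}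

/-!
Let `F` be an unsatisfiable weakly linear `k`-CNF formula and `d = focc (k - 1)`. If one could
delete every literal `u` from `occCount F u - d` of its clauses, with at most one deletion per
clause, then the remaining `(k - 1)`-CNF formula, and hence `F`, would be satisfiable. So by Hall's
theorem some set `A` of literals, each occurring more than `d` times, meets fewer than
`∑ u ∈ A, (occCount F u - d)` clauses. Since two literals lie in at most one common clause, this
deficiency forces `#A > 2 d + 1`, and then the Cauchy–Schwarz inequality for the incidences between
`A` and `F` gives more than `(d + 2).choose 2` clauses.

The lower bound `2 ^ j / (e j) - 1 ≤ focc j` comes from the lopsided Lovász Local Lemma for a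
uniformly random assignment: conditioning on the satisfaction of clauses that contain no negation of
a literal of `C` does not make it more likely that `C` is falsified, and `C` conflicts with at most
`j d` clauses. To lose only `1` when rounding `d`, the lemma is needed with the condition
`e p Δ ≤ 1`, where `Δ` bounds the number of neighbours.
-/

section SetFamily

open Finset

variable {α : Type*} [DecidableEq α] {𝒜 : Finset (Finset α)}

theorem sum_card_filter_mem_eq_sum_card_inter (𝒜 : Finset (Finset α)) (B : Finset α) :
    ∑ b ∈ B, #{s ∈ 𝒜 | b ∈ s} = ∑ s ∈ 𝒜, #(B ∩ s) := by
  simp_rw [← filter_mem_eq_inter]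
  exact sum_card_bipartiteAbove_eq_sum_card_bipartiteBelow (· ∈ ·)

theorem sum_choose_two_card_inter_le
    (h𝒜 : (𝒜 : Set (Finset α)).Pairwise fun s t ↦ #(s ∩ t) ≤ 1) (B : Finset α) :
    ∑ s ∈ 𝒜, (#(B ∩ s)).choose 2 ≤ (#B).choose 2 := by
  have hdisj : (𝒜 : Set (Finset α)).PairwiseDisjoint fun s ↦ powersetCard 2 (B ∩ s) := by
    intro s hs t ht hst
    refine disjoint_left.2 fun p hps hpt ↦ ?_
    rw [mem_powersetCard, subset_inter_iff] at hps hpt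
    have := card_le_card (subset_inter hps.1.2 hpt.1.2)
    have := h𝒜 hs ht hst
    lia
  calc ∑ s ∈ 𝒜, (#(B ∩ s)).choose 2
      = #(𝒜.biUnion fun s ↦ powersetCard 2 (B ∩ s)) := by
        simp only [card_biUnion hdisj, card_powersetCard]
    _ ≤ #(powersetCard 2 B) :=
        card_le_card (biUnion_subset.2 fun s _ ↦ powersetCard_mono inter_subset_left)
    _ = (#B).choose 2 := card_powersetCard 2 B

theorem sum_card_inter_le_card_filter_add_choose_two
    (h𝒜 : (𝒜 : Set (Finset α)).Pairwise fun s t ↦ #(s ∩ t) ≤ 1) (B : Finset α) :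
    ∑ s ∈ 𝒜, #(B ∩ s) ≤ #{s ∈ 𝒜 | (B ∩ s).Nonempty} + (#B).choose 2 := by
  have le_one_add_choose (n : ℕ) : n ≤ 1 + n.choose 2 := by
    cases n with
    | zero => exact Nat.zero_le _
    | succ n => rw [Nat.choose_succ_succ' n 1, Nat.choose_one_right]; lia
  calc ∑ s ∈ 𝒜, #(B ∩ s)
      ≤ ∑ s ∈ 𝒜, ((if (B ∩ s).Nonempty then 1 else 0) + (#(B ∩ s)).choose 2) := by
        refine sum_le_sum fun s _ ↦ ?_
        split_ifs with h
        · exact le_one_add_choose _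
        · simp [not_nonempty_iff_eq_empty.1 h]
    _ = #{s ∈ 𝒜 | (B ∩ s).Nonempty} + ∑ s ∈ 𝒜, (#(B ∩ s)).choose 2 := by
        rw [sum_add_distrib, card_filter]
    _ ≤ #{s ∈ 𝒜 | (B ∩ s).Nonempty} + (#B).choose 2 := by
        gcongr
        exact sum_choose_two_card_inter_le h𝒜 B

theorem sq_sum_card_inter_le_card_mul
    (h𝒜 : (𝒜 : Set (Finset α)).Pairwise fun s t ↦ #(s ∩ t) ≤ 1) (B : Finset α) :
    (∑ s ∈ 𝒜, #(B ∩ s)) ^ 2 ≤ #𝒜 * (∑ s ∈ 𝒜, #(B ∩ s) + 2 * (#B).choose 2) := by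
  have sq_eq_add_choose (n : ℕ) : n ^ 2 = n + 2 * n.choose 2 := by
    induction n with
    | zero => rfl
    | succ n ih => rw [Nat.choose_succ_succ' n 1, Nat.choose_one_right]; lia
  calc (∑ s ∈ 𝒜, #(B ∩ s)) ^ 2
      ≤ #𝒜 * ∑ s ∈ 𝒜, #(B ∩ s) ^ 2 := sq_sum_le_card_mul_sum_sq
    _ = #𝒜 * (∑ s ∈ 𝒜, #(B ∩ s) + 2 * ∑ s ∈ 𝒜, (#(B ∩ s)).choose 2) := by
        rw [mul_sum 𝒜 _ 2, ← sum_add_distrib, sum_congr rfl fun s _ ↦ sq_eq_add_choose #(B ∩ s)]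
    _ ≤ #𝒜 * (∑ s ∈ 𝒜, #(B ∩ s) + 2 * (#B).choose 2) := by
        gcongr
        exact sum_choose_two_card_inter_le h𝒜 B

theorem choose_two_lt_card_of_le_card_filter_mem
    (h𝒜 : (𝒜 : Set (Finset α)).Pairwise fun s t ↦ #(s ∩ t) ≤ 1) {B : Finset α} {n : ℕ}
    (hn : 2 ≤ n) (hB : n + 1 < #B) (hdeg : ∀ b ∈ B, n ≤ #{s ∈ 𝒜 | b ∈ s}) :
    (n + 1).choose 2 < #𝒜 := by
  set T := ∑ s ∈ 𝒜, #(B ∩ s)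
  have hBT : (#B * n : ℝ) ≤ T := mod_cast le_sum_card_inter hdeg
  have hsq : (T : ℝ) ^ 2 ≤ #𝒜 * (T + #B * (#B - 1)) := by
    have : (T : ℝ) ^ 2 ≤ #𝒜 * (T + 2 * ((#B).choose 2 : ℕ)) :=
      mod_cast sq_sum_card_inter_le_card_mul h𝒜 B
    rwa [Nat.cast_choose_two, mul_div_cancel₀ _ two_ne_zero] at this
  have hn' : (2 : ℝ) ≤ n := mod_cast hn
  have hB' : (n + 1 : ℝ) < #B := mod_cast hB
  suffices ((n + 1).choose 2 : ℝ) < #𝒜 from mod_cast this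
  rw [Nat.cast_choose_two]
  push_cast
  by_contra! hcard
  -- `2 T² ≤ n (n + 1) (T + #B (#B - 1))` fails at `T = n #B`, hence for all larger `T`.
  have hupper : 2 * (T : ℝ) ^ 2 ≤ n * (n + 1) * (T + #B * (#B - 1)) := by
    have : (0 : ℝ) ≤ T + #B * (#B - 1) := by nlinarith
    nlinarith
  have hgap : 0 < #B * (n : ℝ) * ((n - 1) * (#B - n - 1)) :=
    mul_pos (by nlinarith) (mul_pos (by linarith) (by linarith))
  have hmono : 0 ≤ ((T : ℝ) - #B * n) * (2 * T + 2 * (#B * n) - n * (n + 1)) :=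
    mul_nonneg (by linarith) (by nlinarith)
  nlinarith

end SetFamily

section Hall

open Finset

theorem exists_pairwise_disjoint_subset_card_eq {ι α : Type*} [DecidableEq α] (t : ι → Finset α)
    (m : ι → ℕ) (h : ∀ A : Finset ι, ∑ i ∈ A, m i ≤ #(A.biUnion t)) :
    ∃ g : ι → Finset α,
      (∀ i, g i ⊆ t i) ∧ (∀ i, #(g i) = m i) ∧ Pairwise (Function.onFun Disjoint g) := by
  classical
  -- Hall's theorem with `m i` copies of each `i`.
  let copies := Σ i, Fin (m i)
  have hall (s : Finset copies) : #s ≤ #(s.biUnion fun c ↦ t c.1) :=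
    calc #s ≤ #((s.image Sigma.fst).sigma fun i ↦ (univ : Finset (Fin (m i)))) :=
          card_le_card fun c hc ↦ mem_sigma.2 ⟨mem_image_of_mem _ hc, mem_univ _⟩
      _ = ∑ i ∈ s.image Sigma.fst, m i := by simp
      _ ≤ #((s.image Sigma.fst).biUnion t) := h _
      _ = #(s.biUnion fun c ↦ t c.1) := by rw [image_biUnion]
  obtain ⟨f, hf, hft⟩ := (all_card_le_biUnion_card_iff_exists_injective _).1 hall
  refine ⟨fun i ↦ univ.image fun k ↦ f ⟨i, k⟩, fun i ↦ ?_, fun i ↦ ?_, fun i i' hii' ↦ ?_⟩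
  · exact image_subset_iff.2 fun k _ ↦ hft ⟨i, k⟩
  · exact (card_image_of_injective univ (hf.comp sigma_mk_injective)).trans (card_fin _)
  · refine disjoint_left.2 fun a ha ha' ↦ ?_
    obtain ⟨k, -, rfl⟩ := mem_image.1 ha
    obtain ⟨k', -, hk'⟩ := mem_image.1 ha'
    exact hii' (congrArg Sigma.fst (hf hk')).symm

end Hall

section Formulas

open Finset

variable {j d : ℕ} {F : CNF}

/-- The numbers `d` over which `focc j` is the supremum: every `j`-CNF formula in which every
literal occurs in at most `d` clauses is satisfiable. -/
def OccAdmissible (j d : ℕ) : Prop :=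
  ∀ F : CNF, IsKCNF j F → (∀ u : Lit, occCount F u ≤ d) → ∃ α, Satisfies α F

theorem IsKCNF.nonempty_of_mem (hF : IsKCNF j F) (hj : j ≠ 0) {C : Clause} (hC : C ∈ F) :
    C.Nonempty :=
  card_ne_zero.1 ((hF C hC).2 ▸ hj)

theorem one_lt_card_of_unsat (hF : IsKCNF j F) (hj : j ≠ 0) (hu : Unsat F) : 1 < #F := by
  by_contra! hcard
  obtain ⟨C, hC⟩ : ∃ C, F ⊆ {C} := card_le_one_iff_subset_singleton.1 hcard
  rcases subset_singleton_iff.1 hC with rfl | rfl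
  · exact hu ⟨fun _ ↦ true, by simp [Satisfies]⟩
  · obtain ⟨l, hl⟩ := hF.nonempty_of_mem hj (mem_singleton_self C)
    exact hu ⟨fun _ ↦ l.2, by simpa [Satisfies] using ⟨l.1, hl⟩⟩

theorem OccAdmissible.exists_satisfies_of_erase (hd : OccAdmissible j d)
    (hF : IsKCNF (j + 1) F) {r : Clause → Lit} (hr : ∀ C ∈ F, r C ∈ C)
    (hocc : ∀ u, #{C ∈ F | u ∈ C ∧ r C ≠ u} ≤ d) : ∃ α, Satisfies α F := by
  have hkcnf : IsKCNF j (F.image fun C ↦ C.erase (r C)) := by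
    refine forall_mem_image.2 fun C hC ↦ ⟨fun x hx ↦ (hF C hC).1 x ?_, ?_⟩
    · exact hx.imp mem_of_mem_erase mem_of_mem_erase
    · rw [card_erase_of_mem (hr C hC), (hF C hC).2, Nat.add_sub_cancel]
  have hocc' (u : Lit) : occCount (F.image fun C ↦ C.erase (r C)) u ≤ d := by
    rw [occCount, filter_image]
    refine card_image_le.trans ((card_le_card fun C ↦ ?_).trans (hocc u))
    simp only [mem_filter, mem_erase]
    exact fun h ↦ ⟨h.1, h.2.2, h.2.1.symm⟩
  obtain ⟨α, hα⟩ := hd _ hkcnf hocc'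
  refine ⟨α, fun C hC ↦ ?_⟩
  obtain ⟨l, hl, hαl⟩ := hα _ (mem_image_of_mem _ hC)
  exact ⟨l, mem_of_mem_erase hl, hαl⟩

theorem OccAdmissible.exists_satisfies_of_disjoint (hd : OccAdmissible j d)
    (hF : IsKCNF (j + 1) F) {g : Lit → Finset Clause} (hgF : ∀ u, g u ⊆ {C ∈ F | u ∈ C})
    (hg : ∀ u, #(g u) = occCount F u - d) (hdisj : Pairwise (Function.onFun Disjoint g)) :
    ∃ α, Satisfies α F := by
  have exists_erasable (C : Clause) : ∃ u, (C ∈ F → u ∈ C) ∧ ∀ v, C ∈ g v → v = u := by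
    by_cases hCg : ∃ u, C ∈ g u
    · obtain ⟨u, hu⟩ := hCg
      refine ⟨u, fun _ ↦ (mem_filter.1 (hgF u hu)).2, fun v hv ↦ ?_⟩
      by_contra hvu
      exact disjoint_left.1 (hdisj hvu) hv hu
    · push Not at hCg
      by_cases hC : C ∈ F
      · obtain ⟨u, hu⟩ := hF.nonempty_of_mem j.succ_ne_zero hC
        exact ⟨u, fun _ ↦ hu, fun v hv ↦ absurd hv (hCg v)⟩
      · exact ⟨(0, true), fun h ↦ absurd h hC, fun v hv ↦ absurd hv (hCg v)⟩
  choose r hr hgr using exists_erasable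
  refine hd.exists_satisfies_of_erase hF hr fun u ↦ ?_
  calc #{C ∈ F | u ∈ C ∧ r C ≠ u} ≤ #({C ∈ F | u ∈ C} \ g u) := by
        refine card_le_card fun C hC ↦ ?_
        rw [mem_filter] at hC
        exact mem_sdiff.2 ⟨mem_filter.2 ⟨hC.1, hC.2.1⟩, fun h ↦ hC.2.2 (hgr C u h).symm⟩
    _ = occCount F u - (occCount F u - d) := by rw [card_sdiff_of_subset (hgF u), hg, occCount]
    _ ≤ d := by lia

theorem OccAdmissible.exists_card_add_lt_sum_occCount (hd : OccAdmissible j d)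
    (hF : IsKCNF (j + 1) F) (hu : Unsat F) :
    ∃ A : Finset Lit, (∀ u ∈ A, d < occCount F u) ∧
      #{C ∈ F | (A ∩ C).Nonempty} + #A * d < ∑ u ∈ A, occCount F u := by
  obtain ⟨B, hB⟩ : ∃ B : Finset Lit,
      #(B.biUnion fun u ↦ {C ∈ F | u ∈ C}) < ∑ u ∈ B, (occCount F u - d) := by
    by_contra! h
    obtain ⟨g, hgF, hg, hdisj⟩ := exists_pairwise_disjoint_subset_card_eq _ _ h
    exact hu (hd.exists_satisfies_of_disjoint hF hgF hg hdisj)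
  set A := {u ∈ B | d < occCount F u}
  have hA : ∀ u ∈ A, d < occCount F u := fun u hu ↦ (mem_filter.1 hu).2
  refine ⟨A, hA, ?_⟩
  calc #{C ∈ F | (A ∩ C).Nonempty} + #A * d
      ≤ #(B.biUnion fun u ↦ {C ∈ F | u ∈ C}) + #A * d := by
        gcongr
        intro C hC
        obtain ⟨hCF, u, hu⟩ := mem_filter.1 hC
        obtain ⟨huA, huC⟩ := mem_inter.1 hu
        exact mem_biUnion.2 ⟨u, filter_subset _ _ huA, mem_filter.2 ⟨hCF, huC⟩⟩
    _ < ∑ u ∈ B, (occCount F u - d) + #A * d := by gcongr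
    _ = ∑ u ∈ A, (occCount F u - d) + ∑ _u ∈ A, d := by
        rw [sum_const, smul_eq_mul, add_left_inj]
        refine (sum_filter_of_ne fun u _ hu ↦ ?_).symm
        exact Nat.lt_of_sub_ne_zero hu
    _ = ∑ u ∈ A, occCount F u := by
        rw [← sum_add_distrib]
        exact sum_congr rfl fun u hu ↦ Nat.sub_add_cancel (hA u hu).le

theorem OccAdmissible.choose_two_lt_card (hd : OccAdmissible j d) (hd0 : d ≠ 0)
    (hF : IsKCNF (j + 1) F) (hw : WeaklyLinear F) (hu : Unsat F) : (d + 2).choose 2 < #F := by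
  have hlin : (F : Set Clause).Pairwise fun C D ↦ #(C ∩ D) ≤ 1 :=
    fun C hC D hD hCD ↦ hw C hC D hD hCD
  obtain ⟨A, hA, hdef⟩ := hd.exists_card_add_lt_sum_occCount hF hu
  have hpairs : #A * d < (#A).choose 2 := by
    have hsum : ∑ u ∈ A, occCount F u = ∑ C ∈ F, #(A ∩ C) :=
      sum_card_filter_mem_eq_sum_card_inter F A
    have := sum_card_inter_le_card_filter_add_choose_two hlin A
    lia
  have hcard : 2 * d < #A - 1 := by
    rw [Nat.choose_two_right, Nat.lt_div_iff_mul_lt' (Nat.even_mul_pred_self _).two_dvd,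
      mul_left_comm] at hpairs
    exact Nat.lt_of_mul_lt_mul_left hpairs
  exact choose_two_lt_card_of_le_card_filter_mem hlin (by lia) (by lia) hA

end Formulas

section LocalLemma

open Finset MeasureTheory

variable {ι Ω : Type*}

/-- The event that none of the events `A i`, `i ∈ S`, occurs. -/
def avoid (A : ι → Set Ω) (S : Finset ι) : Set Ω := ⋂ i ∈ S, (A i)ᶜ

theorem avoid_anti (A : ι → Set Ω) : Antitone (avoid A) :=
  fun _ _ h ↦ Set.biInter_mono h fun _ _ ↦ subset_rfl

variable [MeasurableSpace Ω]

/-- `G` is a lopsidependency graph of the events `A` with probability bound `p`: avoiding any set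
of non-neighbours of `i` leaves the conditional probability of `A i` at most `p`. The condition is
stated without division, so it is void when the conditioning event is null. -/
def IsLopsidependencyGraph (μ : Measure Ω) (G : SimpleGraph ι) (A : ι → Set Ω) (p : ℝ) : Prop :=
  ∀ (i : ι) (S : Finset ι), i ∉ S → (∀ k ∈ S, ¬ G.Adj i k) →
    μ.real (A i ∩ avoid A S) ≤ p * μ.real (avoid A S)

variable {μ : Measure Ω} {G : SimpleGraph ι} {A : ι → Set Ω} {p q : ℝ}

theorem measureReal_avoid_insert_add [DecidableEq ι] [IsFiniteMeasure μ]
    (hA : ∀ i, MeasurableSet (A i)) (i : ι) (S : Finset ι) :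
    μ.real (avoid A (insert i S)) + μ.real (A i ∩ avoid A S) = μ.real (avoid A S) := by
  have hinsert : avoid A (insert i S) = avoid A S \ A i := by
    rw [avoid, set_biInter_insert, Set.inter_comm, Set.sdiff_eq, avoid]
  rw [hinsert, Set.inter_comm, measureReal_sdiff_add_inter (hA i)]

theorem one_sub_pow_card_mul_measureReal_avoid_le [DecidableEq ι] [IsFiniteMeasure μ]
    (hA : ∀ i, MeasurableSet (A i)) (hq : q ≤ 1) {R T : Finset ι} (hRT : Disjoint R T)
    (h : ∀ U ⊂ R ∪ T, ∀ i ∈ R, i ∉ U → μ.real (A i ∩ avoid A U) ≤ q * μ.real (avoid A U)) :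
    (1 - q) ^ #R * μ.real (avoid A T) ≤ μ.real (avoid A (R ∪ T)) := by
  induction R using Finset.induction_on with
  | empty => simp
  | insert i R hi ih =>
    rw [disjoint_insert_left] at hRT
    rw [insert_union] at h ⊢
    have hiRT : i ∉ R ∪ T := by simp [hi, hRT.1]
    have hih := ih hRT.2 fun U hU k hk ↦
      h U (hU.trans (ssubset_insert hiRT)) k (mem_insert_of_mem hk)
    have hstep := h (R ∪ T) (ssubset_insert hiRT) i (mem_insert_self i R) hiRT
    have hsplit := measureReal_avoid_insert_add (μ := μ) hA i (R ∪ T)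
    calc (1 - q) ^ #(insert i R) * μ.real (avoid A T)
        = (1 - q) * ((1 - q) ^ #R * μ.real (avoid A T)) := by
          rw [card_insert_of_notMem hi, pow_succ']; ring
      _ ≤ (1 - q) * μ.real (avoid A (R ∪ T)) :=
          mul_le_mul_of_nonneg_left hih (sub_nonneg.2 hq)
      _ ≤ μ.real (avoid A (insert i (R ∪ T))) := by linarith

theorem IsLopsidependencyGraph.one_sub_pow_mul_measureReal_inter_le [DecidableRel G.Adj]
    [IsFiniteMeasure μ]
    (hG : IsLopsidependencyGraph μ G A p) (hA : ∀ i, MeasurableSet (A i)) (hp : 0 ≤ p)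
    (hq : q ≤ 1) {i : ι} {S : Finset ι} (hi : i ∉ S)
    (hS : ∀ T ⊂ S, ∀ k ∈ S, G.Adj i k → k ∉ T →
      μ.real (A k ∩ avoid A T) ≤ q * μ.real (avoid A T)) :
    (1 - q) ^ #{k ∈ S | G.Adj i k} * μ.real (A i ∩ avoid A S) ≤ p * μ.real (avoid A S) := by
  classical
  set N := {k ∈ S | G.Adj i k}
  set T := {k ∈ S | ¬ G.Adj i k}
  have hNT : N ∪ T = S := filter_union_filter_not_eq _ S
  have hTS : T ⊆ S := filter_subset _ S
  have hfar : μ.real (A i ∩ avoid A T) ≤ p * μ.real (avoid A T) :=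
    hG i T (fun h ↦ hi (mem_filter.1 h).1) fun k hk ↦ (mem_filter.1 hk).2
  have hnear : (1 - q) ^ #N * μ.real (avoid A T) ≤ μ.real (avoid A S) := by
    have hdisj : Disjoint N T := disjoint_filter_filter_not S S _
    have hsteps : ∀ U ⊂ N ∪ T, ∀ k ∈ N, k ∉ U →
        μ.real (A k ∩ avoid A U) ≤ q * μ.real (avoid A U) :=
      fun U hU k hk ↦ hS U (hNT ▸ hU) k (mem_filter.1 hk).1 (mem_filter.1 hk).2
    exact hNT ▸ one_sub_pow_card_mul_measureReal_avoid_le hA hq hdisj hsteps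
  have := pow_nonneg (sub_nonneg.2 hq) #N
  calc (1 - q) ^ #N * μ.real (A i ∩ avoid A S)
      ≤ (1 - q) ^ #N * μ.real (A i ∩ avoid A T) := by
        gcongr
        · finiteness
        · exact avoid_anti A hTS
    _ ≤ (1 - q) ^ #N * (p * μ.real (avoid A T)) := by gcongr
    _ = p * ((1 - q) ^ #N * μ.real (avoid A T)) := mul_left_comm _ _ _
    _ ≤ p * μ.real (avoid A S) := by gcongr

theorem card_filter_adj_lt_degree [Fintype ι] [DecidableRel G.Adj] {i k : ι} (hik : G.Adj i k)
    {T : Finset ι} (hi : i ∉ T) : #{l ∈ T | G.Adj k l} < G.degree k := by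
  refine card_lt_card ((ssubset_iff_of_subset fun l hl ↦ ?_).2 ⟨i, ?_, fun h ↦ ?_⟩)
  · exact (G.mem_neighborFinset k l).2 (mem_filter.1 hl).2
  · exact (G.mem_neighborFinset k i).2 hik.symm
  · exact hi (mem_filter.1 h).1

variable [Fintype ι] [DecidableRel G.Adj] {n : ℕ}

-- A neighbour `k` of `i` has at most `n` neighbours in any `T` that misses `i`, so the induction
-- pays `(1 - q) ^ n` rather than `(1 - q) ^ (n + 1)`.
theorem IsLopsidependencyGraph.measureReal_inter_avoid_le [IsFiniteMeasure μ]
    (hG : IsLopsidependencyGraph μ G A p) (hA : ∀ i, MeasurableSet (A i)) (hp : 0 ≤ p)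
    (hq0 : 0 ≤ q) (hq : q < 1) (hpq : p ≤ q * (1 - q) ^ n) (hdeg : ∀ i, G.degree i ≤ n + 1)
    (S : Finset ι) :
    ∀ i ∉ S, #{k ∈ S | G.Adj i k} ≤ n → μ.real (A i ∩ avoid A S) ≤ q * μ.real (avoid A S) := by
  induction S using Finset.strongInduction with
  | H S ih =>
    intro i hi hn
    have hcond := hG.one_sub_pow_mul_measureReal_inter_le hA hp hq.le hi fun T hTS k _ hik hkT ↦
      ih T hTS k hkT <| Nat.lt_succ_iff.1 <|
        (card_filter_adj_lt_degree hik fun h ↦ hi (hTS.subset h)).trans_le (hdeg k)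
    have hpos : 0 < (1 - q) ^ n := pow_pos (sub_pos.2 hq) n
    refine le_of_mul_le_mul_left ?_ hpos
    calc (1 - q) ^ n * μ.real (A i ∩ avoid A S)
        ≤ (1 - q) ^ #{k ∈ S | G.Adj i k} * μ.real (A i ∩ avoid A S) := by
          gcongr ?_ * _
          exact pow_le_pow_of_le_one (sub_pos.2 hq).le (sub_le_self 1 hq0) hn
      _ ≤ p * μ.real (avoid A S) := hcond
      _ ≤ q * (1 - q) ^ n * μ.real (avoid A S) := by gcongr
      _ = (1 - q) ^ n * (q * μ.real (avoid A S)) := by ring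

theorem IsLopsidependencyGraph.measureReal_avoid_pos_of_lt [IsProbabilityMeasure μ]
    (hG : IsLopsidependencyGraph μ G A p) (hA : ∀ i, MeasurableSet (A i)) (hp : 0 ≤ p)
    (hq0 : 0 ≤ q) (hq : q ≤ 1 / 2) (hpq : p < q * (1 - q) ^ n) (hdeg : ∀ i, G.degree i ≤ n + 1)
    (S : Finset ι) : 0 < μ.real (avoid A S) := by
  classical
  induction S using Finset.induction_on with
  | empty => simp [avoid]
  | insert i S hi ih =>
    have hq1 : 0 < 1 - q := by linarith
    have hcond := hG.one_sub_pow_mul_measureReal_inter_le hA hp (sub_pos.1 hq1).le hi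
      fun T hTS k _ hik hkT ↦
        hG.measureReal_inter_avoid_le hA hp hq0 (sub_pos.1 hq1) hpq.le hdeg T k hkT <|
          Nat.lt_succ_iff.1 <|
            (card_filter_adj_lt_degree hik fun h ↦ hi (hTS.subset h)).trans_le (hdeg k)
    have hnbrs : #{k ∈ S | G.Adj i k} ≤ n + 1 :=
      (card_le_card fun k hk ↦ (G.mem_neighborFinset i k).2 (mem_filter.1 hk).2).trans (hdeg i)
    have hlt : (1 - q) ^ (n + 1) * μ.real (A i ∩ avoid A S)
        < (1 - q) ^ (n + 1) * μ.real (avoid A S) :=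
      calc (1 - q) ^ (n + 1) * μ.real (A i ∩ avoid A S)
          ≤ (1 - q) ^ #{k ∈ S | G.Adj i k} * μ.real (A i ∩ avoid A S) := by
            gcongr ?_ * _
            exact pow_le_pow_of_le_one hq1.le (sub_le_self 1 hq0) hnbrs
        _ ≤ p * μ.real (avoid A S) := hcond
        _ < q * (1 - q) ^ n * μ.real (avoid A S) := by gcongr
        _ ≤ (1 - q) * (1 - q) ^ n * μ.real (avoid A S) := by gcongr; linarith
        _ = (1 - q) ^ (n + 1) * μ.real (avoid A S) := by rw [pow_succ']
    have := lt_of_mul_lt_mul_left hlt (by positivity)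
    have := measureReal_avoid_insert_add (μ := μ) hA i S
    linarith

theorem inv_exp_one_mul_lt_inv_mul_one_sub_inv_pow (n : ℕ) :
    (Real.exp 1 * (n + 1))⁻¹ < (n + 2 : ℝ)⁻¹ * (1 - (n + 2 : ℝ)⁻¹) ^ n := by
  have hexp : (1 + (n + 1 : ℝ)⁻¹) ^ (n + 1) < Real.exp 1 :=
    calc (1 + (n + 1 : ℝ)⁻¹) ^ (n + 1) < Real.exp (n + 1 : ℝ)⁻¹ ^ (n + 1) := by
          rw [add_comm]
          gcongr
          exact Real.add_one_lt_exp (by positivity)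
      _ = Real.exp 1 := by
          rw [← Real.exp_nat_mul, Nat.cast_succ, mul_inv_cancel₀ (by positivity)]
  calc (Real.exp 1 * (n + 1))⁻¹ < ((1 + (n + 1 : ℝ)⁻¹) ^ (n + 1) * (n + 1))⁻¹ := by gcongr
    _ = (n + 2 : ℝ)⁻¹ * (1 - (n + 2 : ℝ)⁻¹) ^ n := by
        have hadd : 1 + (n + 1 : ℝ)⁻¹ = (n + 2) / (n + 1) := by field_simp; ring
        have hsub : 1 - (n + 2 : ℝ)⁻¹ = (n + 1) / (n + 2) := by field_simp; ring
        rw [hadd, hsub, div_pow, div_pow]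
        field_simp
        ring

-- The lopsided Lovász Local Lemma, with Shearer's condition `e p Δ ≤ 1` in place of the usual
-- `e p (Δ + 1) ≤ 1`.
theorem IsLopsidependencyGraph.measureReal_avoid_pos [IsProbabilityMeasure μ]
    (hG : IsLopsidependencyGraph μ G A p) (hA : ∀ i, MeasurableSet (A i)) (hp : 0 ≤ p)
    {Δ : ℕ} (hΔ : Δ ≠ 0) (hdeg : ∀ i, G.degree i ≤ Δ) (hpΔ : Real.exp 1 * (p * Δ) ≤ 1)
    (S : Finset ι) : 0 < μ.real (avoid A S) := by
  obtain ⟨n, rfl⟩ := Nat.exists_eq_succ_of_ne_zero hΔ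
  have hp_le : p ≤ (Real.exp 1 * (n + 1))⁻¹ := by
    rw [← one_div, le_div_iff₀ (by positivity)]
    push_cast at hpΔ
    linarith
  have hq : (n + 2 : ℝ)⁻¹ ≤ 1 / 2 := by
    rw [one_div]
    gcongr
    exact le_add_of_nonneg_left n.cast_nonneg
  exact hG.measureReal_avoid_pos_of_lt hA hp (by positivity) hq
    (hp_le.trans_lt (inv_exp_one_mul_lt_inv_mul_one_sub_inv_pow n)) hdeg S

end LocalLemma

section RandomAssignment

open Finset MeasureTheory ProbabilityTheory

theorem indep_cylinderEvents_infinitePi {ι : Type*} {X : ι → Type*} [∀ i, MeasurableSpace (X i)]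
    (μ : ∀ i, Measure (X i)) [∀ i, IsProbabilityMeasure (μ i)] {S T : Set ι} (hST : Disjoint S T) :
    Indep (cylinderEvents S) (cylinderEvents T) (Measure.infinitePi μ) :=
  indep_iSup_of_disjoint (fun i ↦ (measurable_pi_apply i).comap_le)
    (iIndepFun_infinitePi fun _ ↦ measurable_id) hST

/-- The distribution of a uniformly random assignment: each variable is an independent fair
coin. -/
noncomputable def randomAssignment : Measure (Var → Bool) :=
  Measure.infinitePi fun _ ↦ uniformOn Set.univ

instance : IsProbabilityMeasure randomAssignment := by
  unfold randomAssignment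
  infer_instance

/-- The event that an assignment makes every literal of `C` false. -/
def falsifying (C : Clause) : Set (Var → Bool) := {α | ∀ l ∈ C, α l.1 ≠ l.2}

variable {C : Clause} {F : CNF} {j d : ℕ}

theorem measurableSet_cylinderEvents_setOf_apply_eq {V : Set Var} {x : Var} (hx : x ∈ V)
    (b : Bool) : MeasurableSet[cylinderEvents V] {α : Var → Bool | α x = b} :=
  @measurable_cylinderEvent_apply Var (fun _ ↦ Bool) _ V x hx _ (measurableSet_singleton b)

theorem measurableSet_cylinderEvents_falsifying (C : Clause) :
    MeasurableSet[cylinderEvents (vbl C : Set Var)] (falsifying C) := by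
  have : falsifying C = ⋂ l ∈ C, {α | α l.1 = l.2}ᶜ := by ext; simp [falsifying]
  rw [this]
  exact measurableSet_biInter C fun l hl ↦
    (measurableSet_cylinderEvents_setOf_apply_eq (mem_image_of_mem Prod.fst hl) l.2).compl

theorem measurableSet_falsifying (C : Clause) : MeasurableSet (falsifying C) :=
  cylinderEvents_le_pi _ (measurableSet_cylinderEvents_falsifying C)

theorem Clause.valid.eq_of_mem (hC : C.valid) {x : Var} {a b : Bool} (ha : (x, a) ∈ C)
    (hb : (x, b) ∈ C) : a = b := by
  have := hC x
  cases a <;> cases b <;> simp_all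

theorem Clause.valid.card_vbl (hC : C.valid) : #(vbl C) = #C :=
  card_image_of_injOn fun ⟨_, _⟩ hl ⟨_, _⟩ hl' h ↦ by
    obtain rfl : _ = _ := h
    rw [hC.eq_of_mem hl hl']

theorem falsifying_eq_pi (C : Clause) :
    falsifying C = (vbl C : Set Var).pi fun x ↦ {b | (x, b) ∉ C} := by
  ext α
  constructor
  · exact fun h x _ hx ↦ h _ hx rfl
  · exact fun h l hl hαl ↦ h l.1 (mem_image_of_mem Prod.fst hl) (hαl ▸ hl)

theorem measureReal_falsifying (hC : C.valid) :
    randomAssignment.real (falsifying C) = (2 ^ #C : ℝ)⁻¹ := by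
  have hcoin : ∀ x ∈ vbl C, uniformOn Set.univ {b : Bool | (x, b) ∉ C} = 2⁻¹ := by
    intro x hx
    obtain ⟨⟨y, a⟩, ha, rfl : y = x⟩ := mem_image.1 hx
    have hsingleton : {b | (y, b) ∉ C} = {!a} := by
      ext b
      refine ⟨fun hb ↦ Bool.eq_not.2 ?_, ?_⟩
      · rintro rfl
        exact hb ha
      · rintro rfl hb
        exact Bool.not_ne_self a (hC.eq_of_mem hb ha)
    rw [hsingleton, uniformOn_univ, Measure.count_singleton, Fintype.card_bool, one_div,
      Nat.cast_two]
  rw [measureReal_def, falsifying_eq_pi, randomAssignment,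
    Measure.infinitePi_pi _ fun _ _ ↦ .of_discrete, prod_congr rfl hcoin, prod_const, hC.card_vbl]
  simp only [ENNReal.toReal_pow, ENNReal.toReal_inv, ENNReal.toReal_ofNat, inv_pow]

/-- The graph on the clauses of `F` in which two clauses are adjacent when one contains the
negation of a literal of the other. -/
def conflictGraph (F : CNF) : SimpleGraph F where
  Adj C D := C ≠ D ∧ ∃ l ∈ C.1, (l.1, !l.2) ∈ D.1
  symm := ⟨fun C D ⟨hne, l, hl, hl'⟩ ↦ ⟨hne.symm, _, hl', by simpa using hl⟩⟩
  loopless := ⟨fun _ h ↦ h.1 rfl⟩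

/-- The event that every clause of `S` contains a true literal whose variable lies outside `V`. -/
def satisfyingOutside (V : Finset Var) (S : Finset F) : Set (Var → Bool) :=
  {α | ∀ D ∈ S, ∃ l ∈ D.1, l.1 ∉ V ∧ α l.1 = l.2}

theorem measurableSet_cylinderEvents_satisfyingOutside (V : Finset Var) (S : Finset F) :
    MeasurableSet[cylinderEvents (V : Set Var)ᶜ] (satisfyingOutside V S) := by
  have : satisfyingOutside V S = ⋂ D ∈ S, ⋃ l ∈ {l ∈ D.1 | l.1 ∉ V}, {α | α l.1 = l.2} := by
    ext
    simp [satisfyingOutside, and_assoc]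
  rw [this]
  refine measurableSet_biInter S fun D _ ↦ measurableSet_biUnion _ fun l hl ↦ ?_
  exact measurableSet_cylinderEvents_setOf_apply_eq (by simpa using (mem_filter.1 hl).2) l.2

theorem measureReal_falsifying_inter_satisfyingOutside (C : Clause) (S : Finset F) :
    randomAssignment.real (falsifying C ∩ satisfyingOutside (vbl C) S)
      = randomAssignment.real (falsifying C)
        * randomAssignment.real (satisfyingOutside (vbl C) S) := by
  have hindep : Indep (cylinderEvents (vbl C : Set Var)) (cylinderEvents (vbl C : Set Var)ᶜ)
      randomAssignment := indep_cylinderEvents_infinitePi _ disjoint_compl_right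
  simp only [measureReal_def, (Indep_iff _ _ _).1 hindep _ _
    (measurableSet_cylinderEvents_falsifying C)
    (measurableSet_cylinderEvents_satisfyingOutside (vbl C) S), ENNReal.toReal_mul]

theorem satisfyingOutside_subset_avoid (V : Finset Var) (S : Finset F) :
    satisfyingOutside V S ⊆ avoid (fun C : F ↦ falsifying C) S := by
  refine fun α hα ↦ Set.mem_iInter₂.2 fun D hD hαD ↦ ?_
  obtain ⟨l, hl, -, hαl⟩ := hα D hD
  exact hαD l hl hαl

theorem exists_mem_apply_eq_of_mem_avoid {S : Finset F} {α : Var → Bool}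
    (hα : α ∈ avoid (fun C : F ↦ falsifying C) S) {D : F} (hD : D ∈ S) :
    ∃ l ∈ D.1, α l.1 = l.2 := by
  by_contra! h
  exact Set.mem_iInter₂.1 hα D hD h

-- If `α` falsifies `C`, a literal of `D` made true by `α` on a variable of `C` is the negation of
-- a literal of `C`, so `D` is a neighbour of `C`.
theorem falsifying_inter_avoid_subset_satisfyingOutside {C : F} {S : Finset F} (hC : C ∉ S)
    (hS : ∀ D ∈ S, ¬ (conflictGraph F).Adj C D) :
    falsifying C ∩ avoid (fun C : F ↦ falsifying C) S ⊆ satisfyingOutside (vbl C) S := by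
  rintro α ⟨hαC, hαS⟩ D hD
  obtain ⟨l, hl, hαl⟩ := exists_mem_apply_eq_of_mem_avoid hαS hD
  refine ⟨l, hl, fun hlC ↦ hS D hD ⟨fun h ↦ hC (h ▸ hD), ?_⟩, hαl⟩
  obtain ⟨⟨x, b⟩, hb, rfl : x = l.1⟩ := mem_image.1 hlC
  have hlb : l.2 = !b := Bool.eq_not.2 fun h ↦ hαC _ hb (hαl.trans h)
  exact ⟨_, hb, hlb ▸ hl⟩

theorem isLopsidependencyGraph_conflictGraph (hF : IsKCNF j F) :
    IsLopsidependencyGraph randomAssignment (conflictGraph F) (fun C ↦ falsifying C)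
      (2 ^ j : ℝ)⁻¹ := by
  intro C S hC hS
  calc randomAssignment.real (falsifying C ∩ avoid (fun C : F ↦ falsifying C) S)
      ≤ randomAssignment.real (falsifying C ∩ satisfyingOutside (vbl C) S) :=
        measureReal_mono <| Set.subset_inter Set.inter_subset_left
          (falsifying_inter_avoid_subset_satisfyingOutside hC hS)
    _ = (2 ^ j : ℝ)⁻¹ * randomAssignment.real (satisfyingOutside (vbl C) S) := by
        rw [measureReal_falsifying_inter_satisfyingOutside, measureReal_falsifying (hF C C.2).1,
          (hF C C.2).2]
    _ ≤ (2 ^ j : ℝ)⁻¹ * randomAssignment.real (avoid (fun C : F ↦ falsifying C) S) := by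
        gcongr
        · finiteness
        · exact satisfyingOutside_subset_avoid _ S

theorem degree_conflictGraph_le [DecidableRel (conflictGraph F).Adj] (hF : IsKCNF j F)
    (hocc : ∀ u, occCount F u ≤ d) (C : F) : (conflictGraph F).degree C ≤ j * d := by
  calc (conflictGraph F).degree C
      = #(((conflictGraph F).neighborFinset C).image Subtype.val) :=
        (card_image_of_injective _ Subtype.val_injective).symm
    _ ≤ #(C.1.biUnion fun l ↦ {D ∈ F | (l.1, !l.2) ∈ D}) := by
        refine card_le_card (image_subset_iff.2 fun D hD ↦ ?_)
        obtain ⟨-, l, hl, hlD⟩ := (SimpleGraph.mem_neighborFinset _ C D).1 hD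
        exact mem_biUnion.2 ⟨l, hl, mem_filter.2 ⟨D.2, hlD⟩⟩
    _ ≤ #C.1 * d := card_biUnion_le_card_mul _ _ _ fun l _ ↦ hocc _
    _ = j * d := by rw [(hF C C.2).2]

end RandomAssignment

section OccurrenceBound

open Finset

variable {j d : ℕ}

theorem occAdmissible_of_exp_mul_le (hj : j ≠ 0) (h : Real.exp 1 * (j * d) ≤ 2 ^ j) :
    OccAdmissible j d := by
  classical
  intro F hF hocc
  rcases eq_or_ne d 0 with rfl | hd
  · refine ⟨fun _ ↦ true, fun C hC ↦ ?_⟩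
    obtain ⟨l, hl⟩ := hF.nonempty_of_mem hj hC
    exact absurd (hocc l) (card_pos.2 ⟨C, mem_filter.2 ⟨hC, hl⟩⟩).not_ge
  have hlocal : Real.exp 1 * ((2 ^ j : ℝ)⁻¹ * (j * d : ℕ)) ≤ 1 := by
    rw [mul_left_comm, inv_mul_le_one₀ (by positivity)]
    exact_mod_cast h
  have hpos := (isLopsidependencyGraph_conflictGraph hF).measureReal_avoid_pos
    (fun C ↦ measurableSet_falsifying C) (by positivity) (mul_ne_zero hj hd)
    (degree_conflictGraph_le hF hocc) hlocal univ
  obtain ⟨α, hα⟩ := MeasureTheory.nonempty_of_measureReal_ne_zero hpos.ne'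
  exact ⟨α, fun C hC ↦ exists_mem_apply_eq_of_mem_avoid hα (mem_univ ⟨C, hC⟩)⟩

-- All `2 ^ j` sign patterns on `j` variables.
theorem exists_isKCNF_unsat (j : ℕ) : ∃ F, IsKCNF j F ∧ Unsat F := by
  refine ⟨(range j).powerset.image fun T ↦ (range j).image fun x ↦ (x, decide (x ∈ T)),
    forall_mem_image.2 fun T _ ↦ ⟨fun x hx ↦ ?_, ?_⟩, fun ⟨α, hα⟩ ↦ ?_⟩
  · simp only [mem_image, Prod.mk.injEq] at hx
    grind
  · exact (card_image_of_injective _ fun x y h ↦ congrArg Prod.fst h).trans (card_range j)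
  · obtain ⟨l, hl, hαl⟩ := hα _ (mem_image_of_mem _
      (mem_powerset.2 (filter_subset (fun x ↦ α x = false) (range j))))
    obtain ⟨x, hx, rfl⟩ := mem_image.1 hl
    simp only [mem_filter, hx, true_and] at hαl
    cases h : α x <;> simp [h] at hαl

theorem bddAbove_setOf_occAdmissible (j : ℕ) : BddAbove {d | OccAdmissible j d} := by
  obtain ⟨F, hF, hu⟩ := exists_isKCNF_unsat j
  refine ⟨#F, fun d hd ↦ ?_⟩
  by_contra! hFd
  exact hu (hd F hF fun u ↦ (card_filter_le F _).trans hFd.le)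

theorem OccAdmissible.le_focc (hd : OccAdmissible j d) : d ≤ focc j :=
  le_csSup (bddAbove_setOf_occAdmissible j) hd

theorem occAdmissible_focc (h : focc j ≠ 0) : OccAdmissible j (focc j) := by
  have hne : {d | OccAdmissible j d}.Nonempty := by
    by_contra! hempty
    exact h ((congrArg sSup hempty).trans csSup_empty)
  exact Nat.sSup_mem hne (bddAbove_setOf_occAdmissible j)

theorem two_pow_div_sub_one_le_focc (hj : j ≠ 0) :
    (2 ^ j / (Real.exp 1 * j) - 1 : ℝ) ≤ focc j := by
  set x : ℝ := 2 ^ j / (Real.exp 1 * j)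
  have hfloor : (⌊x⌋₊ : ℝ) ≤ x := Nat.floor_le (by positivity)
  have hadm : OccAdmissible j ⌊x⌋₊ := by
    refine occAdmissible_of_exp_mul_le hj ?_
    rwa [← mul_assoc, mul_comm, ← le_div_iff₀ (by positivity)]
  calc x - 1 ≤ ⌊x⌋₊ := (Nat.sub_one_lt_floor x).le
    _ ≤ focc j := mod_cast hadm.le_focc

end OccurrenceBound

section WeaklyLinear

variable {j : ℕ} {F : CNF}

theorem choose_focc_add_two_lt_card_of_unsat (hF : IsKCNF (j + 1) F) (hw : WeaklyLinear F)
    (hu : Unsat F) : (focc j + 2).choose 2 < F.card := by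
  by_cases h0 : focc j = 0
  · rw [h0]
    exact one_lt_card_of_unsat hF j.succ_ne_zero hu
  · exact (occAdmissible_focc h0).choose_two_lt_card h0 hF hw hu

theorem exists_satisfies_of_card_le (hj : j ≠ 0) (hF : IsKCNF (j + 1) F) (hw : WeaklyLinear F)
    (hcard : (F.card : ℝ) ≤ 4 ^ (j + 1) / (8 * Real.exp 1 ^ 2 * (j : ℝ) ^ 2)) :
    ∃ α, Satisfies α F := by
  by_contra hu
  set x : ℝ := 2 ^ j / (Real.exp 1 * j)
  have hx : 0 < x := by positivity
  have hfocc : x - 1 ≤ focc j := two_pow_div_sub_one_le_focc hj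
  have hlower : ((focc j + 2) * (focc j + 1) / 2 : ℝ) < F.card := by
    have : (((focc j + 2).choose 2 : ℕ) : ℝ) < F.card :=
      mod_cast choose_focc_add_two_lt_card_of_unsat hF hw hu
    rw [Nat.cast_choose_two] at this
    push_cast at this
    linarith
  have hupper : (F.card : ℝ) ≤ x ^ 2 / 2 := by
    refine hcard.trans_eq ?_
    have : (4 : ℝ) ^ (j + 1) = 4 * (2 ^ j) ^ 2 := by
      rw [pow_succ', ← pow_mul, mul_comm j, pow_mul]
      norm_num
    rw [this, div_pow]
    field_simp
    norm_num
  nlinarith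

end WeaklyLinear

/-- Every unsatisfiable weakly linear `k`-CNF formula (`k ≥ 1`) has more than
`C(focc(k-1)+2, 2)` clauses; in particular every weakly linear `k`-CNF formula
(`k ≥ 2`) with at most `4^k/(8e²(k-1)²)` clauses is satisfiable. -/
theorem stmt8 :
    (∀ (k : ℕ) (F : CNF), 1 ≤ k → IsKCNF k F → WeaklyLinear F → Unsat F →
      (focc (k - 1) + 2).choose 2 < F.card) ∧
    (∀ (k : ℕ) (F : CNF), 2 ≤ k → IsKCNF k F → WeaklyLinear F →
      (F.card : ℝ) ≤ 4 ^ k / (8 * Real.exp 1 ^ 2 * ((k : ℝ) - 1) ^ 2) →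
      ∃ α, Satisfies α F) := by
  refine ⟨fun k F hk hF hw hu ↦ ?_, fun k F hk hF hw hcard ↦ ?_⟩
  · obtain ⟨j, rfl⟩ := Nat.exists_eq_add_of_le' hk
    exact choose_focc_add_two_lt_card_of_unsat hF hw hu
  · obtain ⟨j, rfl⟩ := Nat.exists_eq_add_of_le' (one_le_two.trans hk)
    rw [Nat.cast_add_one, add_sub_cancel_right] at hcard
    exact exists_satisfies_of_card_le (by lia) hF hw hcard
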